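/- Let Δ ⊂ ℂ be the open unit disk, and let φ : Δ → Δ × Δ ⊂ ℂ² be an injective holomorphic map whose derivative vanishes nowhere; set D = φ(Δ). Let τ : ℂ² → ℂ² denote coordinatewise complex conjugation, τ(z,w) = (conj z, conj w), and assume τ(D) = D. Then D ∩ ℝ² = {p ∈ D : τ(p) = p} is nonempty and connected (a single real-analytic arc in D). -/

import Mathlib

open Metric Set

open Filter Topology

open scoped ComplexConjugate

/-!
Write `Δ` for the unit disk. The involution of the image `φ(Δ)` lifts through the injective map `φ`
to an involution `σ` of `Δ`, and the real points of `φ(Δ)` are the image of the fixed points of `σ`.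

The lift `σ` is anti-holomorphic although it is not assumed continuous. Local left inverses of `φ`
away from its countably many critical points, together with the identity theorem, show that `σ` is
anti-holomorphic off a countable set, closed in `Δ`. By Baire, this set has an isolated point unless
it is empty, and an isolated point would be a removable singularity.

The hyperbolic midpoint of `0` and `σ 0` is fixed by `σ`. Conjugating by a disk automorphism to
move this point to `0` turns `σ` into `z ↦ c * conj z` by the Schwarz lemma, and the fixed points
of this real-linear map form a convex set.
-/

section Topology

variable {X : Type*} [TopologicalSpace X]

theorem not_eventually_eq_const_of_injOn {Y : Type*} [T1Space X] {f : X → Y} {U : Set X} {x : X}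
    [(𝓝[≠] x).NeBot] (hU : U ∈ 𝓝 x) (hf : InjOn f U) (c : Y) : ¬ ∀ᶠ y in 𝓝[≠] x, f y = c := by
  intro hc
  have hUc : ∀ᶠ y in 𝓝[≠] x, y ∈ U ∧ f y = c :=
    (eventually_mem_set.2 (nhdsWithin_le_nhds hU)).and hc
  obtain ⟨y, ⟨hyU, hyc⟩, hyx⟩ := (hUc.and self_mem_nhdsWithin).exists
  have hne : ∀ᶠ u in 𝓝[≠] x, u ≠ y := nhdsWithin_le_nhds (isOpen_ne.mem_nhds (Ne.symm hyx))
  obtain ⟨u, ⟨huU, huc⟩, huy⟩ := (hUc.and hne).exists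
  exact huy (hf huU hyU (huc.trans hyc.symm))

theorem countable_of_forall_eventually_notMem [HereditarilyLindelofSpace X] {S : Set X}
    (hS : ∀ x ∈ S, ∀ᶠ y in 𝓝[≠] x, y ∉ S) : S.Countable := by
  refine (HereditarilyLindelofSpace.isLindelof S).countable_of_isDiscrete
    (isDiscrete_iff_nhdsNE.2 fun x hx => ?_)
  rw [← disjoint_iff, disjoint_principal_right]
  exact hS x hx

theorem exists_eventually_notMem_of_countable [LocallyCompactSpace X] [T2Space X] {S : Set X}
    (hne : S.Nonempty) (hc : S.Countable) (hS : IsLocallyClosed S) :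
    ∃ x ∈ S, ∀ᶠ y in 𝓝[≠] x, y ∉ S := by
  have := hS.locallyCompactSpace
  have := hc.to_subtype
  have := hne.to_subtype
  obtain ⟨y, x, hx⟩ := nonempty_interior_of_iUnion_of_closed (X := S) (f := fun x : S => {x})
    (fun _ => isClosed_singleton) (iUnion_of_singleton S)
  obtain rfl : x = y := mem_singleton_iff.1 (interior_subset hx)
  have hopen : ({x} : Set S) ∈ 𝓝 x := mem_interior_iff_mem_nhds.1 hx
  rw [mem_nhds_subtype_iff_nhdsWithin, image_singleton, mem_nhdsWithin_iff_eventually] at hopen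
  refine ⟨x, x.2, eventually_nhdsWithin_iff.2 ?_⟩
  filter_upwards [hopen] with y hy hyx hyS using hyx (hy hyS)

end Topology

section Reparametrization

variable {E : Type*} [NormedAddCommGroup E]

theorem exists_analyticAt_leftInverse {𝕜 : Type*} [NontriviallyNormedField 𝕜] [CompleteSpace 𝕜]
    [CharZero 𝕜] [NormedSpace 𝕜 E] [SeparatingDual 𝕜 E] {φ : 𝕜 → E} {v : 𝕜}
    (hφ : AnalyticAt 𝕜 φ v) (hv : deriv φ v ≠ 0) :
    ∃ G : E → 𝕜, ∀ᶠ z in 𝓝 v, AnalyticAt 𝕜 G (φ z) ∧ G (φ z) = z := by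
  obtain ⟨l, hl⟩ := SeparatingDual.exists_ne_zero (R := 𝕜) hv
  have hlφ : AnalyticAt 𝕜 (l ∘ φ) v := (l.analyticAt _).comp hφ
  have hd : deriv (l ∘ φ) v ≠ 0 := by
    rwa [(l.hasFDerivAt.comp_hasDerivAt v hφ.differentiableAt.hasDerivAt).deriv]
  have hinv := hlφ.hasStrictDerivAt.eventually_left_inverse hd
  have hana := hlφ.continuousAt.eventually (hlφ.analyticAt_localInverse hd).eventually_analyticAt
  exact ⟨fun p => hlφ.hasStrictDerivAt.localInverse _ _ _ hd (l p),
    (hana.mono fun _ hz => AnalyticAt.fun_comp (f := l) hz (l.analyticAt _)).and hinv⟩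

variable [NormedSpace ℂ E]

theorem countable_setOf_deriv_eq_zero_of_injOn [CompleteSpace E] {V : Set ℂ} {φ : ℂ → E}
    (hV : IsOpen V) (hφ : AnalyticOnNhd ℂ φ V) (hinj : InjOn φ V) :
    {v ∈ V | deriv φ v = 0}.Countable := by
  refine countable_of_forall_eventually_notMem fun v hv => ?_
  rcases (hφ v hv.1).deriv.eventually_eq_zero_or_eventually_ne_zero with hzero | hne
  · obtain ⟨r, hr, hball⟩ := Metric.eventually_nhds_iff_ball.1 (hzero.and (hV.eventually_mem hv.1))
    have hconst : ∀ w ∈ ball v r, φ w = φ v := fun w hw =>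
      isOpen_ball.is_const_of_deriv_eq_zero (convex_ball v r).isPreconnected
        (fun u hu => (hφ u (hball u hu).2).differentiableAt.differentiableWithinAt)
        (fun u hu => (hball u hu).1) hw (mem_ball_self hr)
    exact absurd (eventually_of_mem (nhdsWithin_le_nhds (ball_mem_nhds v hr)) hconst)
      (not_eventually_eq_const_of_injOn (hV.mem_nhds hv.1) hinj (φ v))
  · filter_upwards [hne] with w hw hwS using hw hwS.2

variable {U V : Set ℂ} {φ ψ : ℂ → E} {s : ℂ → ℂ}

/- If `G` is a left inverse of `φ` on `W`, then `φ ∘ G ∘ ψ` and `ψ` agree wherever `s` takes values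
in `W`; as soon as these points accumulate at `z`, the identity theorem gives `s = G ∘ ψ` near
`z`. -/
theorem analyticAt_of_frequently_mem (hU : IsOpen U) (hV : IsOpen V) (hφ : AnalyticOnNhd ℂ φ V)
    (hψ : AnalyticOnNhd ℂ ψ U) (hφinj : InjOn φ V) (hs : MapsTo s U V) (hsφ : EqOn (φ ∘ s) ψ U)
    {G : E → ℂ} {W : Set ℂ} (hG : ∀ w ∈ W, AnalyticAt ℂ G (φ w) ∧ G (φ w) = w) {z : ℂ}
    (hz : z ∈ U) (hzW : s z ∈ W) (hfreq : ∃ᶠ w in 𝓝[≠] z, s w ∈ W) : AnalyticAt ℂ s z := by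
  have hGs : ∀ w ∈ U, s w ∈ W → G (ψ w) = s w := fun w hw hwW => by
    rw [← hsφ hw]; exact (hG _ hwW).2
  have hGψ : AnalyticAt ℂ (G ∘ ψ) z := by
    refine AnalyticAt.comp ?_ (hψ z hz)
    rw [← hsφ hz]
    exact (hG _ hzW).1
  have hGψz : (G ∘ ψ) z = s z := hGs z hz hzW
  have hφGψ : AnalyticAt ℂ (φ ∘ G ∘ ψ) z := AnalyticAt.comp (hGψz ▸ hφ _ (hs hz)) hGψ
  have hUz : ∀ᶠ w in 𝓝 z, w ∈ U := hU.eventually_mem hz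
  have heq : φ ∘ G ∘ ψ =ᶠ[𝓝 z] ψ := by
    refine (hφGψ.frequently_eq_iff_eventually_eq (hψ z hz)).1 ?_
    refine (hfreq.and_eventually (nhdsWithin_le_nhds hUz)).mono fun w ⟨hwW, hw⟩ => ?_
    rw [Function.comp_apply, Function.comp_apply, hGs w hw hwW]
    exact hsφ hw
  have hGV : ∀ᶠ w in 𝓝 z, (G ∘ ψ) w ∈ V :=
    hGψ.continuousAt.eventually_mem (hV.mem_nhds (hGψz ▸ hs hz))
  refine hGψ.congr ?_
  filter_upwards [heq, hGV, hUz] with w hw hwV hwU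
  exact hφinj hwV (hs hwU) (hw.trans (hsφ hwU).symm)

theorem countable_setOf_not_analyticAt [CompleteSpace E] (hU : IsOpen U) (hV : IsOpen V)
    (hφ : AnalyticOnNhd ℂ φ V) (hψ : AnalyticOnNhd ℂ ψ U) (hφinj : InjOn φ V) (hsinj : InjOn s U)
    (hs : MapsTo s U V) (hsφ : EqOn (φ ∘ s) ψ U) : {z ∈ U | ¬ AnalyticAt ℂ s z}.Countable := by
  set C : Set ℂ := {v ∈ V | deriv φ v = 0}
  have hC : (U ∩ s ⁻¹' C).Countable :=
    MapsTo.countable_of_injOn (f := s) (fun _ hz => hz.2) (hsinj.mono inter_subset_left)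
      (countable_setOf_deriv_eq_zero_of_injOn hV hφ hφinj)
  have hinv : ∀ v ∈ V \ C, ∃ W ∈ 𝓝 v, ∃ G : E → ℂ,
      ∀ w ∈ W, AnalyticAt ℂ G (φ w) ∧ G (φ w) = w := fun v hv =>
    have ⟨G, hG⟩ := exists_analyticAt_leftInverse (hφ v hv.1) fun h => hv.2 ⟨hv.1, h⟩
    ⟨_, hG, G, fun _ hw => hw⟩
  choose! W hW G hG using hinv
  obtain ⟨t, htV, ht, hcover⟩ := TopologicalSpace.countable_cover_nhdsWithin
    fun v hv => mem_nhdsWithin_of_mem_nhds (hW v hv)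
  have hpiece : ∀ v ∈ t, {z ∈ U | s z ∈ W v ∧ ¬ AnalyticAt ℂ s z}.Countable := fun v hv =>
    countable_of_forall_eventually_notMem fun z ⟨hz, hzW, hzs⟩ => by
      refine (not_frequently.1 fun hfreq => hzs ?_).mono fun w hw hwS => hw hwS.2.1
      exact analyticAt_of_frequently_mem hU hV hφ hψ hφinj hs hsφ (hG v (htV hv)) hz hzW hfreq
  refine (hC.union (ht.biUnion hpiece)).mono fun z ⟨hz, hzs⟩ => ?_
  by_cases hzC : s z ∈ C
  · exact Or.inl ⟨hz, hzC⟩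
  · obtain ⟨v, hv, hzv⟩ := mem_iUnion₂.1 (hcover ⟨hs hz, hzC⟩)
    exact Or.inr (mem_biUnion hv ⟨hz, hzv, hzs⟩)

theorem exists_analyticAt_eventuallyEq_of_isBoundedUnder [CompleteSpace E] {f : ℂ → E} {z : ℂ}
    (hd : ∀ᶠ w in 𝓝[≠] z, DifferentiableAt ℂ f w)
    (hb : IsBoundedUnder (· ≤ ·) (𝓝[≠] z) fun w => ‖f w - f z‖) :
    ∃ e : ℂ → E, AnalyticAt ℂ e z ∧ e =ᶠ[𝓝[≠] z] f := by
  have hlim := Complex.tendsto_limUnder_of_differentiable_on_punctured_nhds_of_bounded_under hd hb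
  have heq : ∀ w ≠ z, Function.update f z (limUnder (𝓝[≠] z) f) =ᶠ[𝓝 w] f := fun w hw =>
    (isOpen_ne.eventually_mem hw).mono fun u hu => Function.update_of_ne hu _ _
  refine ⟨_, Complex.analyticAt_of_differentiable_on_punctured_nhds_of_continuousAt ?_
    (continuousAt_update_same.2 hlim),
    eventually_mem_nhdsWithin.mono fun w hw => (heq w hw).self_of_nhds⟩
  filter_upwards [hd, self_mem_nhdsWithin] with w hw hwz
  exact hw.congr_of_eventuallyEq (heq w hwz)

theorem mem_interior_closure_of_analyticAt {e : ℂ → ℂ} {z : ℂ} (he : AnalyticAt ℂ e z)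
    (hV : ∀ᶠ w in 𝓝[≠] z, e w ∈ V) (hconst : ¬ ∀ᶠ w in 𝓝 z, e w = e z) :
    e z ∈ interior (closure V) := by
  have hz : e z ∈ closure V :=
    mem_closure_of_tendsto (he.continuousAt.tendsto.mono_left nhdsWithin_le_nhds) hV
  have hclosure : ∀ᶠ w in 𝓝 z, e w ∈ closure V := by
    filter_upwards [eventually_nhdsWithin_iff.1 hV] with w hw
    rcases eq_or_ne w z with rfl | hwz
    · exact hz
    · exact subset_closure (hw hwz)
  exact mem_interior_iff_mem_nhds.2
    (he.eventually_constant_or_nhds_le_map_nhds.resolve_left hconst hclosure)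

/- The removable singularity of `s` at `z` cannot be filled with a value other than `s z`: by the
open mapping theorem that value lies in `V`, where `φ` separates it from `s z`. -/
theorem analyticAt_of_eventually_analyticAt {Y : Type*} [TopologicalSpace Y] [T2Space Y]
    {φ ψ : ℂ → Y} (hU : IsOpen U) (hVb : Bornology.IsBounded V)
    (hVreg : interior (closure V) = V) (hφ : ContinuousOn φ V) (hψ : ContinuousOn ψ U)
    (hφinj : InjOn φ V) (hsinj : InjOn s U) (hs : MapsTo s U V) (hsφ : EqOn (φ ∘ s) ψ U) {z : ℂ}
    (hz : z ∈ U) (hd : ∀ᶠ w in 𝓝[≠] z, AnalyticAt ℂ s w) : AnalyticAt ℂ s z := by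
  have hd' : ∀ᶠ w in 𝓝[≠] z, DifferentiableAt ℂ s w := hd.mono fun _ h => h.differentiableAt
  have hUz : ∀ᶠ w in 𝓝[≠] z, w ∈ U := nhdsWithin_le_nhds (hU.mem_nhds hz)
  obtain ⟨R, hR⟩ := Metric.isBounded_iff.1 hVb
  obtain ⟨e, he, hes⟩ := exists_analyticAt_eventuallyEq_of_isBoundedUnder hd'
    (isBoundedUnder_of_eventually_le (a := R) (hUz.mono fun w hw => by
      simpa only [dist_eq_norm] using hR (hs hw) (hs hz)))
  have hlim : Tendsto s (𝓝[≠] z) (𝓝 (e z)) :=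
    (he.continuousAt.tendsto.mono_left nhdsWithin_le_nhds).congr' hes
  have hezV : e z ∈ V := by
    rw [← hVreg]
    refine mem_interior_closure_of_analyticAt he ?_ fun hconst => ?_
    · filter_upwards [hes, hUz] with w hw hwU using hw ▸ hs hwU
    · refine not_eventually_eq_const_of_injOn (hU.mem_nhds hz) hsinj (e z) ?_
      filter_upwards [hes, nhdsWithin_le_nhds hconst] with w hw hwc using hw ▸ hwc
  have hVo : IsOpen V := hVreg ▸ isOpen_interior
  have hφe : φ (e z) = ψ z := by
    refine tendsto_nhds_unique ((hφ.continuousAt (hVo.mem_nhds hezV)).tendsto.comp hlim) ?_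
    have hψz := (hψ.continuousAt (hU.mem_nhds hz)).tendsto.mono_left
      (nhdsWithin_le_nhds (s := {z}ᶜ))
    exact hψz.congr' (hUz.mono fun w hw => (hsφ hw).symm)
  have hez : e z = s z := hφinj hezV (hs hz) (hφe.trans (hsφ hz).symm)
  exact Complex.analyticAt_of_differentiable_on_punctured_nhds_of_continuousAt hd'
    (continuousAt_iff_punctured_nhds.2 (hez ▸ hlim))

theorem analyticOnNhd_of_comp_eqOn [CompleteSpace E] (hU : IsOpen U)
    (hVb : Bornology.IsBounded V) (hVreg : interior (closure V) = V)
    (hφ : AnalyticOnNhd ℂ φ V) (hψ : AnalyticOnNhd ℂ ψ U) (hφinj : InjOn φ V) (hψinj : InjOn ψ U)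
    (hs : MapsTo s U V) (hsφ : EqOn (φ ∘ s) ψ U) : AnalyticOnNhd ℂ s U := by
  have hsinj : InjOn s U := (hψinj.congr hsφ.symm).of_comp
  have hcount : {z ∈ U | ¬ AnalyticAt ℂ s z}.Countable :=
    countable_setOf_not_analyticAt hU (hVreg ▸ isOpen_interior) hφ hψ hφinj hsinj hs hsφ
  have hclosed : IsLocallyClosed {z ∈ U | ¬ AnalyticAt ℂ s z} :=
    hU.isLocallyClosed.inter (isOpen_analyticAt ℂ s).isClosed_compl.isLocallyClosed
  by_contra hnot
  have hne : {z ∈ U | ¬ AnalyticAt ℂ s z}.Nonempty := by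
    obtain ⟨z₀, hz₀, hz₀s⟩ := not_forall₂.1 hnot
    exact ⟨z₀, hz₀, hz₀s⟩
  obtain ⟨z, ⟨hz, hzs⟩, hiso⟩ := exists_eventually_notMem_of_countable hne hcount hclosed
  refine hzs (analyticAt_of_eventually_analyticAt hU hVb hVreg hφ.continuousOn hψ.continuousOn
    hφinj hsinj hs hsφ hz ?_)
  filter_upwards [hiso, nhdsWithin_le_nhds (hU.mem_nhds hz)] with w hw hwU
  exact not_not.1 fun h => hw ⟨hwU, h⟩

end Reparametrization

section DiskReflection

/-- The automorphism `z ↦ (z + a) / (1 + conj a * z)` of the unit disk, the hyperbolic translation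
taking `0` to `a`. Conjugation by it moves a fixed point of an involution to `0`. -/
noncomputable def diskTranslation (a z : ℂ) : ℂ := (z + a) / (1 + conj a * z)

theorem mapsTo_conj_ball (r : ℝ) : MapsTo conj (ball (0 : ℂ) r) (ball 0 r) := fun z hz => by
  simpa only [mem_ball_zero_iff, RCLike.norm_conj] using hz

theorem neg_mem_ball_zero {E : Type*} [SeminormedAddCommGroup E] {r : ℝ} {x : E} :
    -x ∈ ball (0 : E) r ↔ x ∈ ball (0 : E) r := by
  simp only [mem_ball_zero_iff, norm_neg]

variable {a z : ℂ}

theorem one_add_conj_mul_ne_zero (ha : a ∈ ball 0 1) (hz : z ∈ ball 0 1) : 1 + conj a * z ≠ 0 := by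
  rw [mem_ball_zero_iff] at ha hz
  intro h
  have hnorm : ‖a‖ * ‖z‖ = 1 := by
    simpa using congrArg norm (eq_neg_of_add_eq_zero_right h)
  exact (mul_lt_one_of_nonneg_of_lt_one_left (norm_nonneg a) ha hz.le).ne hnorm

@[simp]
theorem diskTranslation_zero_right (a : ℂ) : diskTranslation a 0 = a := by simp [diskTranslation]

@[simp]
theorem diskTranslation_neg_self (a : ℂ) : diskTranslation (-a) a = 0 := by simp [diskTranslation]

theorem conj_diskTranslation (a z : ℂ) :
    conj (diskTranslation a z) = diskTranslation (conj a) (conj z) := by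
  simp [diskTranslation]

theorem normSq_one_add_conj_mul_sub (a z : ℂ) :
    Complex.normSq (1 + conj a * z) - Complex.normSq (z + a) =
      (1 - Complex.normSq a) * (1 - Complex.normSq z) := by
  simp only [Complex.normSq_apply, Complex.add_re, Complex.add_im, Complex.mul_re, Complex.mul_im,
    Complex.one_re, Complex.one_im, Complex.conj_re, Complex.conj_im]
  ring

theorem mapsTo_diskTranslation (ha : a ∈ ball 0 1) :
    MapsTo (diskTranslation a) (ball 0 1) (ball 0 1) := fun z hz => by
  have hden := one_add_conj_mul_ne_zero ha hz
  have normSq_lt {w : ℂ} (hw : w ∈ ball 0 1) : Complex.normSq w < 1 := by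
    rw [← Complex.sq_norm]
    exact pow_lt_one₀ (norm_nonneg w) (mem_ball_zero_iff.1 hw) two_ne_zero
  have hpos := mul_pos (sub_pos.2 (normSq_lt ha)) (sub_pos.2 (normSq_lt hz))
  rw [← normSq_one_add_conj_mul_sub, sub_pos, ← Complex.sq_norm, ← Complex.sq_norm] at hpos
  rw [mem_ball_zero_iff, diskTranslation, norm_div, div_lt_one (norm_pos_iff.2 hden)]
  exact lt_of_pow_lt_pow_left₀ 2 (norm_nonneg _) hpos

theorem differentiableOn_diskTranslation (ha : a ∈ ball 0 1) :
    DifferentiableOn ℂ (diskTranslation a) (ball 0 1) := by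
  have hnum : Differentiable ℂ fun z : ℂ => z + a := by fun_prop
  have hden : Differentiable ℂ fun z : ℂ => 1 + conj a * z := by fun_prop
  exact hnum.differentiableOn.div hden.differentiableOn fun z => one_add_conj_mul_ne_zero ha

theorem diskTranslation_neg_diskTranslation (ha : a ∈ ball 0 1) (hz : z ∈ ball 0 1) :
    diskTranslation (-a) (diskTranslation a z) = z := by
  have hden := one_add_conj_mul_ne_zero ha hz
  have hden' := one_add_conj_mul_ne_zero (neg_mem_ball_zero.2 ha) (mapsTo_diskTranslation ha hz)
  have hmul : diskTranslation a z * (1 + conj a * z) = z + a := div_mul_cancel₀ _ hden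
  rw [diskTranslation, div_eq_iff hden', map_neg]
  linear_combination hmul

theorem diskTranslation_diskTranslation_neg (ha : a ∈ ball 0 1) (hz : z ∈ ball 0 1) :
    diskTranslation a (diskTranslation (-a) z) = z := by
  simpa only [neg_neg] using diskTranslation_neg_diskTranslation (neg_mem_ball_zero.2 ha) hz

theorem exists_eq_mul_of_leftInvOn {f g : ℂ → ℂ} (hf : DifferentiableOn ℂ f (ball 0 1))
    (hg : DifferentiableOn ℂ g (ball 0 1)) (hfm : MapsTo f (ball 0 1) (ball 0 1))
    (hgm : MapsTo g (ball 0 1) (ball 0 1)) (hgf : LeftInvOn g f (ball 0 1)) (hf0 : f 0 = 0) :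
    ∃ c : ℂ, ‖c‖ = 1 ∧ ∀ z ∈ ball (0 : ℂ) 1, f z = c * z := by
  have hg0 : g 0 = 0 := by simpa only [hf0] using hgf (mem_ball_self one_pos)
  have hnorm : ∀ z ∈ ball (0 : ℂ) 1, ‖f z‖ = ‖z‖ := by
    intro z hz
    refine le_antisymm ?_ ?_
    · exact Complex.norm_le_norm_of_mapsTo_ball hf (hfm.mono_right ball_subset_closedBall) hf0
        (mem_ball_zero_iff.1 hz)
    · simpa only [hgf hz] using Complex.norm_le_norm_of_mapsTo_ball hg
        (hgm.mono_right ball_subset_closedBall) hg0 (mem_ball_zero_iff.1 (hfm hz))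
  have hhalf : (1 / 2 : ℂ) ∈ ball (0 : ℂ) 1 := by norm_num [mem_ball_zero_iff]
  have hslope : ‖dslope f 0 (1 / 2)‖ = 1 / 1 := by
    rw [dslope_of_ne f (by norm_num), slope_def_module, norm_smul, hf0, sub_zero, sub_zero,
      hnorm _ hhalf]
    norm_num
  obtain ⟨c, hc, hfc⟩ := Complex.affine_of_mapsTo_ball_of_exists_norm_dslope_eq_div' hf
    (hf0.symm ▸ hfm.mono_right ball_subset_closedBall) ⟨1 / 2, hhalf, hslope⟩
  refine ⟨c, by simpa using hc, fun z hz => ?_⟩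
  simpa only [hf0, zero_add, sub_zero, smul_eq_mul, mul_comm] using hfc hz

/- The point `t * a` is the hyperbolic midpoint of `0` and `a`: a translation taking `a` to `0`
takes it to `-(t * a)`, so it is equidistant from both. -/
theorem exists_diskTranslation_neg_eq_neg (ha : a ∈ ball 0 1) :
    ∃ t : ℝ, (t * a : ℂ) ∈ ball 0 1 ∧ diskTranslation (-a) (t * a) = -(t * a) := by
  have hsq : Complex.normSq a ≤ 1 := by
    rw [← Complex.sq_norm]
    exact pow_le_one₀ (norm_nonneg a) (mem_ball_zero_iff.1 ha).le
  have hcont : ContinuousOn (fun t : ℝ => 1 - 2 * t + t ^ 2 * Complex.normSq a) (Icc 0 1) := by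
    fun_prop
  obtain ⟨t, ht, hroot⟩ := intermediate_value_Icc' zero_le_one hcont
    (show (0 : ℝ) ∈ _ from ⟨by linarith, by norm_num⟩)
  have hta : (t * a : ℂ) ∈ ball 0 1 := by
    rw [mem_ball_zero_iff, norm_mul, Complex.norm_of_nonneg ht.1]
    exact mul_lt_one_of_nonneg_of_lt_one_right ht.2 (norm_nonneg a) (mem_ball_zero_iff.1 ha)
  have hroot' : 1 - 2 * (t : ℂ) + t ^ 2 * (a * conj a) = 0 := by
    rw [Complex.mul_conj]
    exact_mod_cast hroot
  refine ⟨t, hta, ?_⟩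
  rw [diskTranslation, div_eq_iff (one_add_conj_mul_ne_zero (neg_mem_ball_zero.2 ha) hta), map_neg]
  linear_combination -a * hroot'

/-- Anti-holomorphic involutions of the unit disk, the symmetry that a real disk induces on its
parameter. Anti-holomorphy of `σ` is encoded as holomorphy of `σ ∘ conj`, and no condition is
imposed outside the disk. -/
structure IsDiskReflection (σ : ℂ → ℂ) : Prop where
  mapsTo : MapsTo σ (ball 0 1) (ball 0 1)
  leftInvOn : LeftInvOn σ σ (ball 0 1)
  differentiableOn_comp_conj : DifferentiableOn ℂ (σ ∘ conj) (ball 0 1)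

namespace IsDiskReflection

variable {σ : ℂ → ℂ} {m : ℂ}

theorem differentiableOn_conj_comp (hσ : IsDiskReflection σ) :
    DifferentiableOn ℂ (conj ∘ σ) (ball 0 1) := fun z hz => by
  have hd : DifferentiableAt ℂ (σ ∘ conj) (conj z) :=
    hσ.differentiableOn_comp_conj.differentiableAt (isOpen_ball.mem_nhds (mapsTo_conj_ball 1 hz))
  simpa [Function.comp_def] using (differentiableAt_conj_conj_iff.2 hd).differentiableWithinAt

theorem exists_diskTranslation_neg_eq_mul_conj (hσ : IsDiskReflection σ) :
    ∃ c : ℂ, ∀ z ∈ ball (0 : ℂ) 1, diskTranslation (-σ 0) (σ z) = c * conj z := by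
  have ha : σ 0 ∈ ball (0 : ℂ) 1 := hσ.mapsTo (mem_ball_self one_pos)
  have hna := neg_mem_ball_zero.2 ha
  have hconj := mapsTo_conj_ball 1
  obtain ⟨c, -, hc⟩ := exists_eq_mul_of_leftInvOn
    (f := diskTranslation (-σ 0) ∘ σ ∘ conj) (g := (conj ∘ σ) ∘ diskTranslation (σ 0))
    ((differentiableOn_diskTranslation hna).comp hσ.differentiableOn_comp_conj
      (hσ.mapsTo.comp hconj))
    (hσ.differentiableOn_conj_comp.comp (differentiableOn_diskTranslation ha)
      (mapsTo_diskTranslation ha))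
    ((mapsTo_diskTranslation hna).comp (hσ.mapsTo.comp hconj))
    ((hconj.comp hσ.mapsTo).comp (mapsTo_diskTranslation ha))
    (fun z hz => by
      simp only [Function.comp_apply, hσ.leftInvOn (hconj hz), Complex.conj_conj,
        diskTranslation_diskTranslation_neg ha (hσ.mapsTo (hconj hz))])
    (by simp only [Function.comp_apply, map_zero, diskTranslation_neg_self])
  exact ⟨c, fun z hz => by
    simpa only [Function.comp_apply, Complex.conj_conj] using hc (conj z) (hconj hz)⟩

theorem exists_fixedPoint (hσ : IsDiskReflection σ) : ∃ m ∈ ball (0 : ℂ) 1, σ m = m := by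
  have h0 : (0 : ℂ) ∈ ball (0 : ℂ) 1 := mem_ball_self one_pos
  have ha := hσ.mapsTo h0
  obtain ⟨c, hc⟩ := hσ.exists_diskTranslation_neg_eq_mul_conj
  have hca : c * conj (σ 0) = -σ 0 := by
    rw [← hc _ ha, hσ.leftInvOn h0, diskTranslation_zero_right]
  obtain ⟨t, hm, hmid⟩ := exists_diskTranslation_neg_eq_neg ha
  refine ⟨t * σ 0, hm, ?_⟩
  have htrans : diskTranslation (-σ 0) (σ (t * σ 0)) = diskTranslation (-σ 0) (t * σ 0) := by
    rw [hc _ hm, hmid, map_mul, Complex.conj_ofReal]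
    linear_combination t * hca
  rw [← diskTranslation_diskTranslation_neg ha (hσ.mapsTo hm), htrans,
    diskTranslation_diskTranslation_neg ha hm]

theorem diskTranslation_comp (hσ : IsDiskReflection σ) (hm : m ∈ ball 0 1) :
    IsDiskReflection (diskTranslation (-m) ∘ σ ∘ diskTranslation m) where
  mapsTo := (mapsTo_diskTranslation (neg_mem_ball_zero.2 hm)).comp
    (hσ.mapsTo.comp (mapsTo_diskTranslation hm))
  leftInvOn z hz := by
    have hz' := mapsTo_diskTranslation hm hz
    simp only [Function.comp_apply, diskTranslation_diskTranslation_neg hm (hσ.mapsTo hz'),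
      hσ.leftInvOn hz', diskTranslation_neg_diskTranslation hm hz]
  differentiableOn_comp_conj := by
    have hcm : conj m ∈ ball (0 : ℂ) 1 := mapsTo_conj_ball 1 hm
    have heq : (diskTranslation (-m) ∘ σ ∘ diskTranslation m) ∘ conj =
        diskTranslation (-m) ∘ (σ ∘ conj) ∘ diskTranslation (conj m) := by
      funext z
      simp only [Function.comp_apply, conj_diskTranslation, Complex.conj_conj]
    have hconj := mapsTo_conj_ball 1
    rw [heq]
    exact (differentiableOn_diskTranslation (neg_mem_ball_zero.2 hm)).comp
      (hσ.differentiableOn_comp_conj.comp (differentiableOn_diskTranslation hcm)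
        (mapsTo_diskTranslation hcm))
      ((hσ.mapsTo.comp hconj).comp (mapsTo_diskTranslation hcm))

theorem isConnected_fixedPoints_of_map_zero (hσ : IsDiskReflection σ) (h0 : σ 0 = 0) :
    IsConnected {z ∈ ball (0 : ℂ) 1 | σ z = z} := by
  obtain ⟨c, hc⟩ := hσ.exists_diskTranslation_neg_eq_mul_conj
  have hlin : ∀ z ∈ ball (0 : ℂ) 1, σ z = c * conj z := fun z hz => by
    simpa [h0, diskTranslation] using hc z hz
  refine Convex.isConnected (fun x ⟨hx, hσx⟩ y ⟨hy, hσy⟩ p q hp hq hpq => ?_)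
    ⟨0, mem_ball_self one_pos, h0⟩
  have hxy : p • x + q • y ∈ ball (0 : ℂ) 1 := convex_ball 0 1 hx hy hp hq hpq
  rw [hlin x hx] at hσx
  rw [hlin y hy] at hσy
  refine ⟨hxy, ?_⟩
  rw [hlin _ hxy]
  simp only [Complex.real_smul, map_add, map_mul, Complex.conj_ofReal]
  linear_combination p * hσx + q * hσy

theorem isConnected_fixedPoints (hσ : IsDiskReflection σ) :
    IsConnected {z ∈ ball (0 : ℂ) 1 | σ z = z} := by
  obtain ⟨m, hm, hσm⟩ := hσ.exists_fixedPoint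
  have hfix : {z ∈ ball (0 : ℂ) 1 | σ z = z} = diskTranslation m ''
      {w ∈ ball (0 : ℂ) 1 | (diskTranslation (-m) ∘ σ ∘ diskTranslation m) w = w} := by
    ext z
    constructor
    · rintro ⟨hz, hσz⟩
      have hinv := diskTranslation_diskTranslation_neg hm hz
      refine ⟨diskTranslation (-m) z,
        ⟨mapsTo_diskTranslation (neg_mem_ball_zero.2 hm) hz, ?_⟩, hinv⟩
      rw [Function.comp_apply, Function.comp_apply, hinv, hσz]
    · rintro ⟨w, ⟨hw, hσw⟩, rfl⟩
      have hw' := mapsTo_diskTranslation hm hw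
      refine ⟨hw', ?_⟩
      rw [← diskTranslation_diskTranslation_neg hm (hσ.mapsTo hw')]
      exact congrArg (diskTranslation m) hσw
  rw [hfix]
  refine ((hσ.diskTranslation_comp hm).isConnected_fixedPoints_of_map_zero ?_).image _
    ((differentiableOn_diskTranslation hm).continuousOn.mono fun _ hw => hw.1)
  simp only [Function.comp_apply, diskTranslation_zero_right, hσm, diskTranslation_neg_self]

end IsDiskReflection

end DiskReflection

section RealDisk

theorem leftInvOn_of_comp_eqOn_involutive {α β : Type*} {φ : α → β} {τ : β → β} {σ : α → α}
    {U : Set α} (hτ : Function.Involutive τ) (hinj : InjOn φ U) (hσ : MapsTo σ U U)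
    (hφσ : EqOn (φ ∘ σ) (τ ∘ φ) U) : LeftInvOn σ σ U := fun z hz => by
  refine hinj (hσ (hσ hz)) hz ?_
  calc φ (σ (σ z)) = τ (φ (σ z)) := hφσ (hσ hz)
    _ = τ (τ (φ z)) := congrArg τ (hφσ hz)
    _ = φ z := hτ _

theorem image_setOf_fixed_eq_of_comp_eqOn {α β : Type*} {φ : α → β} {τ : β → β} {σ : α → α}
    {U : Set α} (hinj : InjOn φ U) (hσ : MapsTo σ U U) (hφσ : EqOn (φ ∘ σ) (τ ∘ φ) U) :
    φ '' {z ∈ U | σ z = z} = {p ∈ φ '' U | τ p = p} := by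
  ext p
  constructor
  · rintro ⟨z, ⟨hz, hσz⟩, rfl⟩
    exact ⟨mem_image_of_mem φ hz, (hφσ hz).symm.trans (congrArg φ hσz)⟩
  · rintro ⟨⟨z, hz, rfl⟩, hp⟩
    exact ⟨z, ⟨hz, hinj (hσ hz) hz ((hφσ hz).trans hp)⟩, rfl⟩

variable {E : Type*} [NormedAddCommGroup E] [NormedSpace ℂ E] [CompleteSpace E] [StarAddMonoid E]
  [StarModule ℂ E] [ContinuousStar E] {φ : ℂ → E}

theorem isDiskReflection_of_comp_eqOn_star {σ : ℂ → ℂ} (hφ : DifferentiableOn ℂ φ (ball 0 1))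
    (hinj : InjOn φ (ball 0 1)) (hσ : MapsTo σ (ball 0 1) (ball 0 1))
    (hφσ : EqOn (φ ∘ σ) (star ∘ φ) (ball 0 1)) : IsDiskReflection σ where
  mapsTo := hσ
  leftInvOn := leftInvOn_of_comp_eqOn_involutive star_involutive hinj hσ hφσ
  differentiableOn_comp_conj := by
    have hconj := mapsTo_conj_ball 1
    have hψ : DifferentiableOn ℂ (star ∘ φ ∘ conj) (ball 0 1) := fun z hz =>
      (differentiableAt_star_conj_iff.2
        (hφ.differentiableAt (isOpen_ball.mem_nhds (hconj hz)))).differentiableWithinAt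
    have hψinj : InjOn (star ∘ φ ∘ conj) (ball 0 1) :=
      star_injective.comp_injOn (hinj.comp (starRingEnd ℂ).injective.injOn hconj)
    have hreg : interior (closure (ball (0 : ℂ) 1)) = ball 0 1 := by
      rw [closure_ball _ one_ne_zero, interior_closedBall _ one_ne_zero]
    exact (analyticOnNhd_of_comp_eqOn isOpen_ball isBounded_ball hreg
      (hφ.analyticOnNhd isOpen_ball) (hψ.analyticOnNhd isOpen_ball) hinj hψinj (hσ.comp hconj)
      fun z hz => hφσ (hconj hz)).differentiableOn

theorem real_disk_meets_real_points_in_arc_general (hφ : DifferentiableOn ℂ φ (ball 0 1))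
    (hinj : InjOn φ (ball 0 1)) (hreal : MapsTo star (φ '' ball 0 1) (φ '' ball 0 1)) :
    IsConnected {p ∈ φ '' ball 0 1 | star p = p} := by
  have hlift : ∀ z ∈ ball (0 : ℂ) 1, ∃ w ∈ ball (0 : ℂ) 1, φ w = star (φ z) := fun z hz =>
    hreal (mem_image_of_mem φ hz)
  choose! σ hσ hφσ using hlift
  rw [← image_setOf_fixed_eq_of_comp_eqOn hinj hσ hφσ]
  exact (isDiskReflection_of_comp_eqOn_star hφ hinj hσ hφσ).isConnected_fixedPoints.image φ
    (hφ.continuousOn.mono fun _ hz => hz.1)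

end RealDisk

/-- **Theorem 4.1.** A real disk in the bidisk (the image of an injective
holomorphic immersion `φ : Δ → Δ × Δ` invariant under the anti-holomorphic
involution `τ(z,w) = (conj z, conj w)`) meets the real points `ℝ²` in a
nonempty connected set (a single arc). -/
theorem real_disk_meets_real_points_in_arc
    (φ : ℂ → ℂ × ℂ)
    (hφ : DifferentiableOn ℂ φ (Metric.ball 0 1))
    (hmaps : Set.MapsTo φ (Metric.ball 0 1)
      ((Metric.ball (0 : ℂ) 1) ×ˢ (Metric.ball (0 : ℂ) 1)))
    (hinj : Set.InjOn φ (Metric.ball 0 1))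
    (himm : ∀ z ∈ Metric.ball (0 : ℂ) 1, deriv φ z ≠ 0)
    (D : Set (ℂ × ℂ)) (hD : D = φ '' (Metric.ball 0 1))
    (hreal : (fun p : ℂ × ℂ => ((starRingEnd ℂ) p.1, (starRingEnd ℂ) p.2)) '' D = D)
    (F : Set (ℂ × ℂ))
    (hF : F = {p ∈ D | (starRingEnd ℂ) p.1 = p.1 ∧ (starRingEnd ℂ) p.2 = p.2}) :
    F.Nonempty ∧ IsConnected F := by
  subst hD hF
  have hconn :=
    real_disk_meets_real_points_in_arc_general hφ hinj (mapsTo_iff_image_subset.2 hreal.le)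
  simp only [Prod.ext_iff] at hconn
  exact ⟨hconn.nonempty, hconn⟩
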